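/- Let S be a simple bounded lattice (S has a least element 0_S and a greatest element, and S has exactly two lattice congruences) and let L be a lattice. Then the map j : L → S ⊠ L defined by j(x) = 0_S □ x is an injective lattice homomorphism which is congruence-preserving: for every lattice congruence θ of L there is exactly one lattice congruence Θ of S ⊠ L such that Θ(j x, j y) holds if and only if θ(x, y) holds, for all x, y ∈ L. -/

import Mathlib

section Defs

variable (A B : Type*) [Lattice A] [Lattice B]

/-- A lattice congruence. -/
def LatCon (L : Type*) [Lattice L] (θ : L → L → Prop) : Prop :=
  Equivalence θ ∧
  ∀ a b c d : L, θ a b → θ c d → θ (a ⊔ c) (b ⊔ d) ∧ θ (a ⊓ c) (b ⊓ d)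

/-- A lattice congruence on a poset (which is a lattice), expressed via least upper
bounds and greatest lower bounds. -/
def PosetLatCon {P : Type*} [PartialOrder P] (θ : P → P → Prop) : Prop :=
  Equivalence θ ∧
  (∀ a b c d s t : P, θ a b → θ c d → IsLUB {a, c} s → IsLUB {b, d} t → θ s t) ∧
  (∀ a b c d s t : P, θ a b → θ c d → IsGLB {a, c} s → IsGLB {b, d} t → θ s t)

/-- `a □ b = {(x,y) : x ≤ a or y ≤ b}`. -/
def boxe (a : A) (b : B) : Set (A × B) := {p | p.1 ≤ a ∨ p.2 ≤ b}

/-- The box product `A □ B`: all finite nonempty intersections `⋂ (aᵢ □ bᵢ)`. -/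
def boxProd : Set (Set (A × B)) :=
  {H | ∃ F : Finset (A × B), F.Nonempty ∧ H = ⋂ p ∈ F, boxe A B p.1 p.2}

/-- `⊥_{A,B} = (A × ⊥_B) ∪ (⊥_A × B)`. -/
def botPairs : Set (A × B) := {p | IsBot p.1 ∨ IsBot p.2}

/-- `a ⊠ b = {(x,y) : x ≤ a and y ≤ b} ∪ ⊥_{A,B}`. -/
def btimes (a : A) (b : B) : Set (A × B) := {p | p.1 ≤ a ∧ p.2 ≤ b} ∪ botPairs A B

/-- The lattice tensor product `A ⊠ B`: the confined elements of `A □ B`. -/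
def ltens : Set (Set (A × B)) :=
  {H | H ∈ boxProd A B ∧ ∃ (a : A) (b : B), H ⊆ btimes A B a b}

end Defs

/-!
Since `S` is bounded, the confined elements of `S □ L` are the finite intersections `⋂ (aᵢ □ bᵢ)` in
which some `aᵢ` is `⊥`. For such an `H` and `x ≠ ⊥`, the fiber `{y | (x, y) ∈ H}` is the principal
ideal generated by the meet `H(x)` of the `bᵢ` with `x ≰ aᵢ`.

*Existence.* Given `θ` on `L`, let `H Θ K` mean that `H(x) θ K(x)` for all `x`. Meets in `S ⊠ L` are
intersections, so they are computed fiberwise. For joins, there is a finite `P ⊆ S` with `⊤ ∈ P`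
such that `H` and `K` are the least confined elements containing the pairs `(p, H(p))`, respectively
`(p, K(p))`, for `p ∈ P`. Then `H ⊔ K` is the least one containing the pairs `(p, H(p) ⊔ K(p))`, and
this is `⋂_{J ⊆ P \ {⊤}} (⋁ J) □ ⋁_{p ∈ P \ J} (H(p) ⊔ K(p))`. So the fibers of `H ⊔ K` are given by
fixed lattice polynomials in those of `H` and `K`.

*Uniqueness.* For `b ≤ c` in `L`, the map `a ↦ (a □ b) ∩ (⊥ □ c)` is a lattice homomorphism
`S → S ⊠ L` from `j b` to `j c`. A congruence `Θ` of `S ⊠ L` restricting to `θ` contains every pair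
with `θ`-congruent fibers, because `H` is a finite join of values of such homomorphisms. Conversely,
let `H Θ K`, `H ⊆ a □ b`, `x ≰ a` and `c = K(x)`. The homomorphism `f` for `b ⊓ c ≤ c` satisfies
`f x ⊓ H ≤ f a` and `f x ≤ f a ⊔ (f x ⊓ K)`, so `Θ` identifies `f a` with `f (a ⊔ x)`. By simplicity
of `S` it identifies `j (b ⊓ c)` with `j c`; meeting over all such `b` gives `H(x) ⊓ K(x) θ K(x)`.
-/

section LatticeCongruences

variable {M N : Type*} [Lattice M] [Lattice N]

namespace LatCon

variable {θ : M → M → Prop}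

theorem sup_congr (hθ : LatCon M θ) {a b c d : M} (hab : θ a b) (hcd : θ c d) :
    θ (a ⊔ c) (b ⊔ d) :=
  (hθ.2 a b c d hab hcd).1

theorem inf_congr (hθ : LatCon M θ) {a b c d : M} (hab : θ a b) (hcd : θ c d) :
    θ (a ⊓ c) (b ⊓ d) :=
  (hθ.2 a b c d hab hcd).2

theorem dual (hθ : LatCon M θ) : LatCon Mᵒᵈ θ :=
  ⟨hθ.1, fun a b c d hab hcd => (hθ.2 a b c d hab hcd).symm⟩

theorem finset_sup' (hθ : LatCon M θ) {ι : Type*} {s : Finset ι} (hs : s.Nonempty) {f g : ι → M}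
    (h : ∀ i ∈ s, θ (f i) (g i)) : θ (s.sup' hs f) (s.sup' hs g) := by
  induction hs using Finset.Nonempty.cons_induction with
  | singleton i => simpa only [Finset.sup'_singleton] using h i (Finset.mem_singleton_self i)
  | cons i s hi hs ih =>
    rw [Finset.sup'_cons hs, Finset.sup'_cons hs]
    exact hθ.sup_congr (h i (Finset.mem_cons_self i s))
      (ih fun j hj => h j (Finset.mem_cons_of_mem hj))

theorem finset_inf' (hθ : LatCon M θ) {ι : Type*} {s : Finset ι} (hs : s.Nonempty) {f g : ι → M}
    (h : ∀ i ∈ s, θ (f i) (g i)) : θ (s.inf' hs f) (s.inf' hs g) :=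
  hθ.dual.finset_sup' hs h

theorem comap {Θ : N → N → Prop} (hΘ : LatCon N Θ) (f : LatticeHom M N) :
    LatCon M fun a b => Θ (f a) (f b) := by
  refine ⟨hΘ.1.comap f, fun a b c d hab hcd => ?_⟩
  simp only [map_sup, map_inf]
  exact hΘ.2 _ _ _ _ hab hcd

theorem rel_sup_of_inf_le_of_le_sup (hθ : LatCon M θ) {u v s t : M} (huv : θ u v)
    (hu : t ⊓ u ≤ s) (hv : t ≤ s ⊔ t ⊓ v) : θ s (s ⊔ t) := by
  have h : θ (s ⊔ t ⊓ u) (s ⊔ t ⊓ v) :=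
    hθ.sup_congr (hθ.1.refl s) (hθ.inf_congr (hθ.1.refl t) huv)
  rwa [sup_eq_left.2 hu, le_antisymm (sup_le_sup_left inf_le_left s) (sup_le le_sup_left hv)] at h

end LatCon

theorem posetLatCon_iff_latCon {θ : M → M → Prop} : PosetLatCon θ ↔ LatCon M θ := by
  constructor
  · rintro ⟨hequiv, hsup, hinf⟩
    exact ⟨hequiv, fun a b c d hab hcd =>
      ⟨hsup a b c d _ _ hab hcd isLUB_pair isLUB_pair,
        hinf a b c d _ _ hab hcd isGLB_pair isGLB_pair⟩⟩
  · intro hθ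
    refine ⟨hθ.1, fun a b c d s t hab hcd hs ht => ?_, fun a b c d s t hab hcd hs ht => ?_⟩
    · rw [hs.unique isLUB_pair, ht.unique isLUB_pair]
      exact hθ.sup_congr hab hcd
    · rw [hs.unique isGLB_pair, ht.unique isGLB_pair]
      exact hθ.inf_congr hab hcd

/-- Simplicity of a lattice: its only congruences are equality and the total relation. The
one-element lattice is allowed. -/
def IsSimpleLattice (M : Type*) [Lattice M] : Prop :=
  ∀ θ : M → M → Prop, LatCon M θ → (∀ a b : M, θ a b ↔ a = b) ∨ ∀ a b : M, θ a b

theorem IsSimpleLattice.rel_map (hM : IsSimpleLattice M) {Θ : N → N → Prop} (hΘ : LatCon N Θ)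
    (f : LatticeHom M N) {a b : M} (hab : a ≠ b) (h : Θ (f a) (f b)) (c d : M) :
    Θ (f c) (f d) :=
  (hM _ (hΘ.comap f)).elim (fun heq => absurd ((heq a b).1 h) hab) fun htotal => htotal c d

end LatticeCongruences

section BoxProduct

variable {A B : Type*} [Lattice A] [Lattice B] {H K : Set (A × B)}

@[simp]
theorem mem_boxe {a x : A} {b y : B} : (x, y) ∈ boxe A B a b ↔ x ≤ a ∨ y ≤ b :=
  Iff.rfl

theorem boxe_subset_boxe_right {a : A} {b c : B} (h : b ≤ c) : boxe A B a b ⊆ boxe A B a c :=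
  fun _ hp => hp.imp_right fun hb => hb.trans h

theorem mk_mem_iInter_boxe {ι : Type*} {I : Finset ι} {a : ι → A} {b : ι → B} {x : A} {y : B} :
    (x, y) ∈ ⋂ i ∈ I, boxe A B (a i) (b i) ↔ ∀ i ∈ I, x ≤ a i ∨ y ≤ b i := by
  simp only [Set.mem_iInter, mem_boxe]

namespace boxProd

theorem boxe_mem (a : A) (b : B) : boxe A B a b ∈ boxProd A B :=
  ⟨{(a, b)}, Finset.singleton_nonempty _, by rw [Finset.set_biInter_singleton]⟩

theorem iInter_boxe_mem {ι : Type*} {I : Finset ι} (hI : I.Nonempty) (a : ι → A) (b : ι → B) :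
    ⋂ i ∈ I, boxe A B (a i) (b i) ∈ boxProd A B := by
  classical
  exact ⟨I.image fun i => (a i, b i), hI.image _, by rw [Finset.set_biInter_finset_image]⟩

theorem inter_mem (hH : H ∈ boxProd A B) (hK : K ∈ boxProd A B) : H ∩ K ∈ boxProd A B := by
  classical
  obtain ⟨F, hF, rfl⟩ := hH
  obtain ⟨G, -, rfl⟩ := hK
  exact ⟨F ∪ G, hF.mono Finset.subset_union_left, by rw [Finset.set_biInter_inter]⟩

theorem mk_mem_of_le (hH : H ∈ boxProd A B) {x x' : A} {y y' : B} (h : (x, y) ∈ H) (hx : x' ≤ x)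
    (hy : y' ≤ y) : (x', y') ∈ H := by
  obtain ⟨F, -, rfl⟩ := hH
  rw [mk_mem_iInter_boxe] at h ⊢
  exact fun p hp => (h p hp).imp hx.trans hy.trans

theorem sup_left_mem (hH : H ∈ boxProd A B) {x x' : A} {y : B} (h : (x, y) ∈ H)
    (h' : (x', y) ∈ H) : (x ⊔ x', y) ∈ H := by
  obtain ⟨F, -, rfl⟩ := hH
  rw [mk_mem_iInter_boxe] at h h' ⊢
  intro p hp
  rw [sup_le_iff, and_or_right]
  exact ⟨h p hp, h' p hp⟩

theorem sup_right_mem (hH : H ∈ boxProd A B) {x : A} {y y' : B} (h : (x, y) ∈ H)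
    (h' : (x, y') ∈ H) : (x, y ⊔ y') ∈ H := by
  obtain ⟨F, -, rfl⟩ := hH
  rw [mk_mem_iInter_boxe] at h h' ⊢
  intro p hp
  rw [sup_le_iff, or_and_left]
  exact ⟨h p hp, h' p hp⟩

theorem bot_mk_mem [OrderBot A] (hH : H ∈ boxProd A B) (y : B) : ((⊥ : A), y) ∈ H := by
  obtain ⟨F, -, rfl⟩ := hH
  exact mk_mem_iInter_boxe.2 fun p _ => Or.inl bot_le

theorem boxe_bot_subset_iff [OrderBot A] (hH : H ∈ boxProd A B) {b : B} :
    boxe A B ⊥ b ⊆ H ↔ ∀ x, (x, b) ∈ H := by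
  refine ⟨fun h x => h (mem_boxe.2 (Or.inr le_rfl)), fun h => ?_⟩
  rintro ⟨x, y⟩ (hx | hy)
  · obtain rfl := le_bot_iff.1 hx
    exact bot_mk_mem hH y
  · exact mk_mem_of_le hH (h x) le_rfl hy

end boxProd

theorem inter_mem_ltens (hH : H ∈ ltens A B) (hK : K ∈ ltens A B) : H ∩ K ∈ ltens A B := by
  obtain ⟨hH, a, b, hab⟩ := hH
  exact ⟨boxProd.inter_mem hH hK.1, a, b, Set.inter_subset_left.trans hab⟩

open Classical in
theorem filter_not_le_nonempty [OrderBot A] {ι : Type*} {I : Finset ι} {a : ι → A}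
    (hbot : ∃ i ∈ I, a i = ⊥) {x : A} (hx : x ≠ ⊥) : (I.filter fun i => ¬ x ≤ a i).Nonempty := by
  obtain ⟨i, hi, hai⟩ := hbot
  exact ⟨i, Finset.mem_filter.2 ⟨hi, by rwa [hai, le_bot_iff]⟩⟩

open Classical in
theorem mk_mem_iInter_boxe_iff_le_inf' {ι : Type*} {I : Finset ι} {a : ι → A} {b : ι → B} {x : A}
    {y : B} (hne : (I.filter fun i => ¬ x ≤ a i).Nonempty) :
    (x, y) ∈ ⋂ i ∈ I, boxe A B (a i) (b i) ↔ y ≤ (I.filter fun i => ¬ x ≤ a i).inf' hne b := by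
  simp only [mk_mem_iInter_boxe, Finset.le_inf'_iff, Finset.mem_filter, and_imp,
    or_iff_not_imp_left]

end BoxProduct

section Confined

variable {S L : Type*} [Lattice S] [BoundedOrder S] [Lattice L]

theorem mem_ltens_of_subset_boxe_bot {H : Set (S × L)} (hH : H ∈ boxProd S L) {c : L}
    (hc : H ⊆ boxe S L ⊥ c) : H ∈ ltens S L := by
  refine ⟨hH, ⊤, c, fun p hp => ?_⟩
  rcases hc hp with hx | hy
  · exact Or.inr (Or.inl (isBot_iff_eq_bot.2 (le_bot_iff.1 hx)))
  · exact Or.inl ⟨le_top, hy⟩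

theorem iInter_boxe_mem_ltens {ι : Type*} {I : Finset ι} {a : ι → S} (hbot : ∃ i ∈ I, a i = ⊥)
    (b : ι → L) : ⋂ i ∈ I, boxe S L (a i) (b i) ∈ ltens S L := by
  obtain ⟨i, hi, hai⟩ := hbot
  have hsub : ⋂ i ∈ I, boxe S L (a i) (b i) ⊆ boxe S L (a i) (b i) := Set.biInter_subset_of_mem hi
  rw [hai] at hsub
  exact mem_ltens_of_subset_boxe_bot (boxProd.iInter_boxe_mem ⟨i, hi⟩ a b) hsub

theorem exists_eq_iInter_boxe_of_mem_ltens {H : Set (S × L)} (hH : H ∈ ltens S L) :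
    ∃ F : Finset (S × L), (∃ p ∈ F, p.1 = ⊥) ∧ H = ⋂ p ∈ F, boxe S L p.1 p.2 := by
  classical
  obtain ⟨⟨F, -, rfl⟩, a, c, hconf⟩ := hH
  refine ⟨insert (⊥, c) F, ⟨_, Finset.mem_insert_self _ _, rfl⟩, ?_⟩
  rw [Finset.set_biInter_insert, eq_comm, Set.inter_eq_right]
  intro p hp
  rcases hconf hp with h | h | h
  · exact Or.inr h.2
  · exact Or.inl (h _)
  · exact Or.inr (h _)

theorem boxe_bot_mem_ltens (x : L) : boxe S L ⊥ x ∈ ltens S L :=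
  mem_ltens_of_subset_boxe_bot (boxProd.boxe_mem ⊥ x) subset_rfl

theorem isLeast_boxe_bot_sup (x y : L) :
    IsLeast {H | H ∈ ltens S L ∧ boxe S L ⊥ x ⊆ H ∧ boxe S L ⊥ y ⊆ H} (boxe S L ⊥ (x ⊔ y)) := by
  refine ⟨⟨boxe_bot_mem_ltens _, boxe_subset_boxe_right le_sup_left,
    boxe_subset_boxe_right le_sup_right⟩, ?_⟩
  rintro H ⟨⟨hH, -⟩, hx, hy⟩
  rw [boxProd.boxe_bot_subset_iff hH] at hx hy
  exact (boxProd.boxe_bot_subset_iff hH).2 fun s => boxProd.sup_right_mem hH (hx s) (hy s)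

theorem isGreatest_boxe_bot_inf (x y : L) :
    IsGreatest {H | H ∈ ltens S L ∧ H ⊆ boxe S L ⊥ x ∧ H ⊆ boxe S L ⊥ y}
      (boxe S L ⊥ (x ⊓ y)) := by
  refine ⟨⟨boxe_bot_mem_ltens _, boxe_subset_boxe_right inf_le_left,
    boxe_subset_boxe_right inf_le_right⟩, ?_⟩
  rintro H ⟨-, hx, hy⟩ ⟨s, z⟩ hz
  rw [mem_boxe, le_inf_iff, or_and_left]
  exact ⟨hx hz, hy hz⟩

end Confined

/-- The lattice tensor product `A ⊠ B` as a type, ordered by inclusion. -/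
abbrev LatticeTensor (A B : Type*) [Lattice A] [Lattice B] : Type _ :=
  {H // H ∈ ltens A B}

namespace LatticeTensor

variable {S L : Type*} [Lattice S] [BoundedOrder S] [Lattice L]

/-! ### Fibers -/

section Fibers

variable {H K : LatticeTensor S L}

theorem exists_fiberMax (H : LatticeTensor S L) :
    ∃ f : S → L, f ⊥ = f ⊤ ∧ ∀ x y, (x, y) ∈ H.1 ↔ x = ⊥ ∨ y ≤ f x := by
  classical
  obtain ⟨F, hF, hH⟩ := exists_eq_iInter_boxe_of_mem_ltens H.2
  have hfiber : ∀ x : S, ∃ v, x ≠ ⊥ → ∀ y, (x, y) ∈ H.1 ↔ y ≤ v := by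
    intro x
    by_cases hx : x = ⊥
    · obtain ⟨p, -⟩ := hF
      exact ⟨p.2, fun h => absurd hx h⟩
    · exact ⟨_, fun _ y => by
        rw [hH, mk_mem_iInter_boxe_iff_le_inf' (filter_not_le_nonempty hF hx)]⟩
  choose f hf using hfiber
  refine ⟨fun x => if x = ⊥ then f ⊤ else f x, by simp, fun x y => ?_⟩
  by_cases hx : x = ⊥
  · simp [hx, boxProd.bot_mk_mem H.2.1]
  · simp [hx, hf x hx]

/-- The generator `H(x)` of the principal ideal `{y | (x, y) ∈ H}`, for `x ≠ ⊥`. At `x = ⊥`, where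
the fiber is all of `L`, it takes by convention the same value as at `⊤`, so that statements about
all values `H(x)` need not exclude `⊥`. -/
noncomputable def fiberMax (H : LatticeTensor S L) : S → L :=
  (exists_fiberMax H).choose

theorem fiberMax_bot : fiberMax H ⊥ = fiberMax H ⊤ :=
  (exists_fiberMax H).choose_spec.1

theorem mk_mem_iff {x : S} {y : L} : (x, y) ∈ H.1 ↔ x = ⊥ ∨ y ≤ fiberMax H x :=
  (exists_fiberMax H).choose_spec.2 x y

theorem mk_fiberMax_mem (H : LatticeTensor S L) (x : S) : (x, fiberMax H x) ∈ H.1 :=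
  mk_mem_iff.2 (Or.inr le_rfl)

theorem fiberMax_top_le (H : LatticeTensor S L) (x : S) : fiberMax H ⊤ ≤ fiberMax H x := by
  have hmem : (x, fiberMax H ⊤) ∈ H.1 :=
    boxProd.mk_mem_of_le H.2.1 (mk_fiberMax_mem H ⊤) le_top le_rfl
  rcases mk_mem_iff.1 hmem with rfl | hle
  · rw [fiberMax_bot]
  · exact hle

open Classical in
theorem fiberMax_eq_inf' {ι : Type*} {I : Finset ι} {a : ι → S} {b : ι → L}
    (hH : H.1 = ⋂ i ∈ I, boxe S L (a i) (b i)) {x : S}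
    (hne : (I.filter fun i => ¬ x ≤ a i).Nonempty) :
    fiberMax H x = (I.filter fun i => ¬ x ≤ a i).inf' hne b := by
  have hx : x ≠ ⊥ := by
    rintro rfl
    obtain ⟨i, hi⟩ := hne
    exact (Finset.mem_filter.1 hi).2 bot_le
  refine eq_of_forall_le_iff fun y => ?_
  rw [← mk_mem_iInter_boxe_iff_le_inf', ← hH, mk_mem_iff, or_iff_right hx]

theorem fiberMax_eq_of_mk_mem_iff [Nontrivial S] {f : S → L} (hbot : f ⊥ = f ⊤)
    (hf : ∀ x y, (x, y) ∈ H.1 ↔ x = ⊥ ∨ y ≤ f x) : fiberMax H = f := by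
  have heq : ∀ x ≠ ⊥, fiberMax H x = f x := fun x hx => eq_of_forall_le_iff fun y => by
    simpa only [mk_mem_iff, or_iff_right hx] using hf x y
  funext x
  rcases eq_or_ne x ⊥ with rfl | hx
  · rw [fiberMax_bot, hbot, heq ⊤ top_ne_bot]
  · exact heq x hx

end Fibers

/-! ### Joins and the lattice structure -/

/-- `P` generates `H` if each fiber of `H` over some `x ≠ ⊥` coincides with the fiber over some
`p ∈ P` above `x`. Then `H` is the least confined element containing `(p, H(p))` for `p ∈ P`. -/
def Generates (P : Finset S) (H : LatticeTensor S L) : Prop :=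
  ∀ x ≠ ⊥, ∃ p ∈ P, x ≤ p ∧ fiberMax H x ≤ fiberMax H p

theorem Generates.mono {P Q : Finset S} {H : LatticeTensor S L} (hP : Generates P H)
    (hPQ : P ⊆ Q) : Generates Q H :=
  fun x hx => (hP x hx).imp fun _ h => ⟨hPQ h.1, h.2⟩

theorem Generates.le {P : Finset S} {H K : LatticeTensor S L} (hP : Generates P H)
    (h : ∀ p ∈ P, (p, fiberMax H p) ∈ K.1) : H ≤ K := by
  rintro ⟨x, y⟩ hxy
  rcases eq_or_ne x ⊥ with rfl | hx
  · exact boxProd.bot_mk_mem K.2.1 y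
  · obtain ⟨p, hp, hxp, hle⟩ := hP x hx
    exact boxProd.mk_mem_of_le K.2.1 (h p hp) hxp (((mk_mem_iff.1 hxy).resolve_left hx).trans hle)

theorem exists_generates (H : LatticeTensor S L) : ∃ P : Finset S, Generates P H := by
  classical
  obtain ⟨F, -, hH⟩ := exists_eq_iInter_boxe_of_mem_ltens H.2
  refine ⟨F.powerset.image fun G => G.inf Prod.fst, fun x hx => ?_⟩
  -- The largest element of `S` lying below the same first coordinates as `x`.
  set p := (F.filter fun i => x ≤ i.1).inf Prod.fst
  have hxp : x ≤ p := Finset.le_inf fun i hi => (Finset.mem_filter.1 hi).2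
  have hp : (p, fiberMax H x) ∈ H.1 := by
    have hmem := mk_fiberMax_mem H x
    rw [hH, mk_mem_iInter_boxe] at hmem ⊢
    exact fun i hi => (hmem i hi).imp_left fun hxi =>
      Finset.inf_le (Finset.mem_filter.2 ⟨hi, hxi⟩)
  exact ⟨p, Finset.mem_image_of_mem _ (Finset.mem_powerset.2 (Finset.filter_subset _ _)), hxp,
    (mk_mem_iff.1 hp).resolve_left (ne_bot_of_le_ne_bot hx hxp)⟩

theorem exists_common_generates (s : Finset (LatticeTensor S L)) :
    ∃ P : Finset S, ∀ H ∈ s, Generates P H := by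
  classical
  choose P hP using exists_generates (S := S) (L := L)
  exact ⟨s.biUnion P, fun H hH => (hP H).mono (Finset.subset_biUnion_of_mem P hH)⟩

open Classical in
/-- The least confined element containing the pairs `(p, q p)` for `p ∈ P` and for `p = ⊤`.
Adjoining `⊤` makes the finite joins in `L` nonempty, as `L` need not have a least element. -/
def hull (P : Finset S) (q : S → L) : LatticeTensor S L :=
  ⟨⋂ J ∈ P.powerset,
      boxe S L (J.sup id) ((insert ⊤ (P \ J)).sup' (Finset.insert_nonempty _ _) q),
    iInter_boxe_mem_ltens ⟨∅, Finset.empty_mem_powerset P, Finset.sup_empty⟩ _⟩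

open Classical in
theorem mk_mem_hull {P : Finset S} {q : S → L} {p : S} (hp : p ∈ insert ⊤ P) :
    (p, q p) ∈ (hull P q).1 := by
  refine mk_mem_iInter_boxe.2 fun J _ => ?_
  by_cases hpJ : p ∈ J
  · exact Or.inl (Finset.le_sup (f := id) hpJ)
  · refine Or.inr (Finset.le_sup' q ?_)
    rw [Finset.mem_insert, Finset.mem_sdiff]
    exact (Finset.mem_insert.1 hp).imp_right fun h => ⟨h, hpJ⟩

open Classical in
theorem hull_le {P : Finset S} {q : S → L} {K : LatticeTensor S L}
    (h : ∀ p ∈ insert ⊤ P, (p, q p) ∈ K.1) : hull P q ≤ K := by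
  obtain ⟨F, -, hK⟩ := exists_eq_iInter_boxe_of_mem_ltens K.2
  rintro ⟨x, y⟩ hxy
  rw [hK]
  refine mk_mem_iInter_boxe.2 fun i hi => ?_
  have hPi : ∀ p ∈ insert ⊤ P, p ≤ i.1 ∨ q p ≤ i.2 := fun p hp =>
    mk_mem_iInter_boxe.1 (hK ▸ h p hp) i hi
  rcases hPi ⊤ (Finset.mem_insert_self _ _) with htop | htop
  · exact Or.inl (le_top.trans htop)
  rcases mk_mem_iInter_boxe.1 hxy (P.filter fun p => p ≤ i.1)
    (Finset.mem_powerset.2 (Finset.filter_subset _ _)) with hx | hy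
  · exact Or.inl (hx.trans (Finset.sup_le fun p hp => (Finset.mem_filter.1 hp).2))
  · refine Or.inr (hy.trans (Finset.sup'_le _ _ fun p hp => ?_))
    rcases Finset.mem_insert.1 hp with rfl | hp
    · exact htop
    · rw [Finset.mem_sdiff, Finset.mem_filter, not_and] at hp
      exact (hPi p (Finset.mem_insert_of_mem hp.1)).resolve_left (hp.2 hp.1)

theorem isLUB_hull {P : Finset S} {H K : LatticeTensor S L} (hH : Generates P H)
    (hK : Generates P K) : IsLUB {H, K} (hull P (fiberMax H ⊔ fiberMax K)) := by
  classical
  set M := hull P (fiberMax H ⊔ fiberMax K)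
  have hmem : ∀ p ∈ P, (p, fiberMax H p ⊔ fiberMax K p) ∈ M.1 :=
    fun p hp => mk_mem_hull (Finset.mem_insert_of_mem hp)
  constructor
  · rintro _ (rfl | rfl)
    · exact hH.le fun p hp => boxProd.mk_mem_of_le M.2.1 (hmem p hp) le_rfl le_sup_left
    · exact hK.le fun p hp => boxProd.mk_mem_of_le M.2.1 (hmem p hp) le_rfl le_sup_right
  · intro N hN
    have hHN : H ≤ N := hN (Set.mem_insert _ _)
    have hKN : K ≤ N := hN (Set.mem_insert_of_mem _ rfl)
    exact hull_le fun p _ => boxProd.sup_right_mem N.2.1 (hHN (mk_fiberMax_mem H p))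
      (hKN (mk_fiberMax_mem K p))

theorem exists_isLUB_pair (H K : LatticeTensor S L) : ∃ M, IsLUB {H, K} M := by
  classical
  obtain ⟨P, hP⟩ := exists_common_generates {H, K}
  exact ⟨_, isLUB_hull (hP H (by simp)) (hP K (by simp))⟩

noncomputable instance : Lattice (LatticeTensor S L) :=
  Lattice.ofIsLUBofIsGLB (fun H K => (exists_isLUB_pair H K).choose)
    (fun H K => ⟨H.1 ∩ K.1, inter_mem_ltens H.2 K.2⟩)
    (fun H K => (exists_isLUB_pair H K).choose_spec)
    (fun H K => ⟨by rintro _ (rfl | rfl); exacts [Set.inter_subset_left, Set.inter_subset_right],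
      fun _ hM => Set.subset_inter (hM (Set.mem_insert _ _)) (hM (Set.mem_insert_of_mem _ rfl))⟩)

theorem sup_eq_hull {P : Finset S} {H K : LatticeTensor S L} (hH : Generates P H)
    (hK : Generates P K) : H ⊔ K = hull P (fiberMax H ⊔ fiberMax K) :=
  isLUB_pair.unique (isLUB_hull hH hK)

theorem mem_inf {H K : LatticeTensor S L} {p : S × L} : p ∈ (H ⊓ K).1 ↔ p ∈ H.1 ∧ p ∈ K.1 :=
  Iff.rfl

theorem fiberMax_inf [Nontrivial S] (H K : LatticeTensor S L) :
    fiberMax (H ⊓ K) = fiberMax H ⊓ fiberMax K :=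
  fiberMax_eq_of_mk_mem_iff (by simp only [Pi.inf_apply, fiberMax_bot]) fun x y => by
    rw [mem_inf, mk_mem_iff, mk_mem_iff, ← or_and_left, Pi.inf_apply, le_inf_iff]

/-! ### Extending a congruence of `L` -/

/-- The embedding `j : L → S ⊠ L`, `x ↦ ⊥ □ x`. -/
def emb (x : L) : LatticeTensor S L :=
  ⟨boxe S L ⊥ x, boxe_bot_mem_ltens x⟩

theorem mk_mem_emb {x : L} {s : S} {y : L} :
    (s, y) ∈ (emb x : LatticeTensor S L).1 ↔ s = ⊥ ∨ y ≤ x := by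
  rw [emb, mem_boxe, le_bot_iff]

/-- The extension to `S ⊠ L` of a congruence `θ` of `L`: elements are related when their fibers have
`θ`-congruent generators. -/
def extend (θ : L → L → Prop) (H K : LatticeTensor S L) : Prop :=
  ∀ x, θ (fiberMax H x) (fiberMax K x)

section Extension

variable [Nontrivial S] {θ : L → L → Prop}

theorem fiberMax_emb (x : L) (s : S) : fiberMax (emb x) s = x :=
  congrFun (fiberMax_eq_of_mk_mem_iff (f := fun _ => x) rfl fun _ _ => mk_mem_emb) s

theorem emb_injective : Function.Injective (emb : L → LatticeTensor S L) := fun x y h => by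
  rw [← fiberMax_emb x (⊤ : S), h, fiberMax_emb]

theorem extend_emb_iff {x y : L} : extend (S := S) θ (emb x) (emb y) ↔ θ x y := by
  simp only [extend, fiberMax_emb, forall_const]

theorem extend_of_forall_ne_bot {H K : LatticeTensor S L}
    (h : ∀ x ≠ ⊥, θ (fiberMax H x) (fiberMax K x)) : extend θ H K := by
  intro x
  rcases eq_or_ne x ⊥ with rfl | hx
  · rw [fiberMax_bot, fiberMax_bot]
    exact h ⊤ top_ne_bot
  · exact h x hx

theorem extend_hull (hθ : LatCon L θ) (P : Finset S) {q q' : S → L} (h : ∀ p, θ (q p) (q' p)) :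
    extend θ (hull P q) (hull P q') := by
  classical
  refine extend_of_forall_ne_bot fun x hx => ?_
  have hne := filter_not_le_nonempty (a := fun J : Finset S => J.sup id)
    ⟨∅, Finset.empty_mem_powerset P, Finset.sup_empty⟩ hx
  rw [fiberMax_eq_inf' rfl hne, fiberMax_eq_inf' rfl hne]
  exact hθ.finset_inf' hne fun J _ => hθ.finset_sup' _ fun p _ => h p

theorem latCon_extend (hθ : LatCon L θ) : LatCon (LatticeTensor S L) (extend θ) := by
  classical
  refine ⟨⟨fun H x => hθ.1.refl _, fun h x => hθ.1.symm (h x),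
    fun h h' x => hθ.1.trans (h x) (h' x)⟩, fun H H' K K' hH hK => ⟨?_, fun x => ?_⟩⟩
  · obtain ⟨P, hP⟩ := exists_common_generates {H, H', K, K'}
    rw [sup_eq_hull (hP H (by simp)) (hP K (by simp)),
      sup_eq_hull (hP H' (by simp)) (hP K' (by simp))]
    exact extend_hull hθ P fun p => hθ.sup_congr (hH p) (hK p)
  · rw [fiberMax_inf, fiberMax_inf]
    exact hθ.inf_congr (hH x) (hK x)

end Extension

/-! ### Uniqueness of the extension -/

section Step

variable {b c : L} {a : S}

/-- The element `(a □ b) ∩ (⊥ □ c)` of `S ⊠ L`. For `b ≤ c` it is the least one containing `(a, c)`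
and `(⊤, b)`. -/
def step (b c : L) (a : S) : LatticeTensor S L :=
  ⟨boxe S L a b ∩ boxe S L ⊥ c, mem_ltens_of_subset_boxe_bot
    (boxProd.inter_mem (boxProd.boxe_mem a b) (boxProd.boxe_mem ⊥ c)) Set.inter_subset_right⟩

theorem mk_mem_step {s : S} {y : L} :
    (s, y) ∈ (step b c a).1 ↔ (s ≤ a ∨ y ≤ b) ∧ (s = ⊥ ∨ y ≤ c) := by
  rw [step, Set.mem_inter_iff, mem_boxe, mem_boxe, le_bot_iff]

theorem step_le_iff (hbc : b ≤ c) {K : LatticeTensor S L} :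
    step b c a ≤ K ↔ (a, c) ∈ K.1 ∧ (⊤, b) ∈ K.1 := by
  constructor
  · exact fun h => ⟨h (mk_mem_step.2 ⟨Or.inl le_rfl, Or.inr le_rfl⟩),
      h (mk_mem_step.2 ⟨Or.inr le_rfl, Or.inr hbc⟩)⟩
  · rintro ⟨hac, hb⟩ ⟨s, y⟩ hsy
    obtain ⟨hs | hyb, rfl | hyc⟩ := mk_mem_step.1 hsy
    · exact boxProd.bot_mk_mem K.2.1 y
    · exact boxProd.mk_mem_of_le K.2.1 hac hs hyc
    · exact boxProd.bot_mk_mem K.2.1 y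
    · exact boxProd.mk_mem_of_le K.2.1 hb le_top hyb

theorem step_eq_emb_inf_step {e : L} (hce : c ≤ e) : step b c a = emb c ⊓ step b e a := by
  ext ⟨s, y⟩
  rw [mem_inf, mk_mem_emb, mk_mem_step, mk_mem_step]
  have : y ≤ c → y ≤ e := fun hy => hy.trans hce
  tauto

/-- For `b ≤ c`, the lattice homomorphism `S → S ⊠ L`, `a ↦ (a □ b) ∩ (⊥ □ c)`. It transports the
simplicity of `S` to `S ⊠ L`. -/
def stepHom (hbc : b ≤ c) : LatticeHom S (LatticeTensor S L) where
  toFun := step b c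
  map_sup' a a' := by
    apply le_antisymm
    · set K := step b c a ⊔ step b c a'
      obtain ⟨hac, hb⟩ := (step_le_iff hbc).1 (le_sup_left : step b c a ≤ K)
      obtain ⟨hac', -⟩ := (step_le_iff hbc).1 (le_sup_right : step b c a' ≤ K)
      exact (step_le_iff hbc).2 ⟨boxProd.sup_left_mem K.2.1 hac hac', hb⟩
    · have hmono : Monotone (step b c : S → LatticeTensor S L) := fun u v huv _ h =>
        ⟨h.1.imp_left fun hu => hu.trans huv, h.2⟩
      exact hmono.le_map_sup a a'
  map_inf' a a' := by
    ext ⟨s, y⟩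
    rw [mem_inf, mk_mem_step, mk_mem_step, mk_mem_step, le_inf_iff]
    tauto

theorem stepHom_apply (hbc : b ≤ c) : stepHom hbc a = step b c a :=
  rfl

theorem stepHom_bot (hbc : b ≤ c) : stepHom hbc (⊥ : S) = emb b := by
  ext ⟨s, y⟩
  rw [stepHom_apply, mk_mem_step, mk_mem_emb, le_bot_iff, and_iff_left_iff_imp]
  exact Or.imp_right hbc.trans'

theorem stepHom_top (hbc : b ≤ c) : stepHom hbc (⊤ : S) = emb c := by
  ext ⟨s, y⟩
  rw [stepHom_apply, mk_mem_step, mk_mem_emb, and_iff_right (Or.inl le_top)]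

theorem eq_sup'_step {P : Finset S} (hne : P.Nonempty) {H : LatticeTensor S L}
    (hP : Generates P H) {m : L} (hm : m ≤ fiberMax H ⊤) :
    H = P.sup' hne fun p => step m (fiberMax H p) p := by
  have hm' : ∀ p, m ≤ fiberMax H p := fun p => hm.trans (fiberMax_top_le H p)
  apply le_antisymm
  · refine hP.le fun p hp => ((step_le_iff (hm' p)).1 ?_).1
    exact Finset.le_sup' (fun p => step m (fiberMax H p) p) hp
  · exact Finset.sup'_le _ _ fun p _ => (step_le_iff (hm' p)).2
      ⟨mk_fiberMax_mem H p, mk_mem_iff.2 (Or.inr hm)⟩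

end Step

section Uniqueness

variable {Θ : LatticeTensor S L → LatticeTensor S L → Prop} {θ : L → L → Prop}
  {H K : LatticeTensor S L}

theorem rel_step (hΘ : LatCon _ Θ) {c c' : L} (h : Θ (emb c) (emb c')) (b : L) (a : S) :
    Θ (step b c a) (step b c' a) := by
  have hc : step b c a = emb c ⊓ step b (c ⊔ c') a := step_eq_emb_inf_step le_sup_left
  have hc' : step b c' a = emb c' ⊓ step b (c ⊔ c') a := step_eq_emb_inf_step le_sup_right
  rw [hc, hc']
  exact hΘ.inf_congr h (hΘ.1.refl _)

theorem rel_of_extend [Nontrivial S] (hΘ : LatCon _ Θ) (hemb : ∀ x y, θ x y → Θ (emb x) (emb y))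
    (h : extend θ H K) : Θ H K := by
  classical
  obtain ⟨P, hP⟩ := exists_common_generates {H, K}
  have hH : Generates P H := hP H (by simp)
  have hK : Generates P K := hP K (by simp)
  have hne : P.Nonempty := (hH ⊤ top_ne_bot).imp fun _ hp => hp.1
  have hjoin := hΘ.finset_sup' hne fun p _ =>
    rel_step hΘ (hemb _ _ (h p)) (fiberMax H ⊤ ⊓ fiberMax K ⊤) p
  rwa [← eq_sup'_step hne hH inf_le_left, ← eq_sup'_step hne hK inf_le_right] at hjoin

theorem rel_emb_of_subset_boxe (hS : IsSimpleLattice S) (hΘ : LatCon _ Θ) (h : Θ H K) {x a : S}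
    {b : L} (hxa : ¬ x ≤ a) (hH : H.1 ⊆ boxe S L a b) :
    Θ (emb (b ⊓ fiberMax K x)) (emb (fiberMax K x)) := by
  set c := fiberMax K x
  have hbc : b ⊓ c ≤ c := inf_le_right
  have hHa : step (b ⊓ c) c x ⊓ H ≤ step (b ⊓ c) c a := by
    rintro ⟨s, y⟩ ⟨hx, hsy⟩
    have hsa : s ≤ a ∨ y ≤ b := hH hsy
    obtain ⟨-, hs | hy⟩ := mk_mem_step.1 hx
    · exact mk_mem_step.2 ⟨Or.inl (hs ▸ bot_le), Or.inl hs⟩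
    · exact mk_mem_step.2 ⟨hsa.imp_right fun hyb => le_inf hyb hy, Or.inr hy⟩
  have hKa : step (b ⊓ c) c x ≤ step (b ⊓ c) c a ⊔ step (b ⊓ c) c x ⊓ K := by
    have hxc : (x, c) ∈ (step (b ⊓ c) c x ⊓ K).1 :=
      ⟨((step_le_iff hbc).1 le_rfl).1, mk_fiberMax_mem K x⟩
    exact (step_le_iff hbc).2 ⟨(le_sup_right : _ ≤ step (b ⊓ c) c a ⊔ _) hxc,
      ((step_le_iff hbc).1 le_sup_left).2⟩
  have hstep : Θ (stepHom hbc a) (stepHom hbc (a ⊔ x)) := by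
    rw [map_sup]
    exact hΘ.rel_sup_of_inf_le_of_le_sup h hHa hKa
  have hne : a ≠ a ⊔ x := fun heq => hxa (heq ▸ le_sup_right)
  rw [← stepHom_bot (S := S) hbc, ← stepHom_top (S := S) hbc]
  exact hS.rel_map hΘ (stepHom hbc) hne hstep ⊥ ⊤

theorem rel_inf_fiberMax (hS : IsSimpleLattice S) (hΘ : LatCon _ Θ) (hθ : LatCon L θ)
    (hemb : ∀ x y, Θ (emb x) (emb y) → θ x y) (h : Θ H K) {x : S} (hx : x ≠ ⊥) :
    θ (fiberMax H x ⊓ fiberMax K x) (fiberMax K x) := by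
  classical
  obtain ⟨F, hF, hH⟩ := exists_eq_iInter_boxe_of_mem_ltens H.2
  rw [fiberMax_eq_inf' hH (filter_not_le_nonempty hF hx)]
  refine Finset.inf'_induction _ _ (p := fun v => θ (v ⊓ fiberMax K x) (fiberMax K x)) ?_ ?_
  · intro v hv w hw
    rw [inf_inf_distrib_right]
    simpa only [inf_idem] using hθ.inf_congr hv hw
  · intro i hi
    obtain ⟨hiF, hxi⟩ := Finset.mem_filter.1 hi
    exact hemb _ _ (rel_emb_of_subset_boxe hS hΘ h hxi (hH ▸ Set.biInter_subset_of_mem hiF))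

theorem eq_extend [Nontrivial S] (hS : IsSimpleLattice S) (hΘ : LatCon _ Θ) (hθ : LatCon L θ)
    (hemb : ∀ x y, Θ (emb x) (emb y) ↔ θ x y) : Θ = extend θ := by
  funext H K
  refine propext ⟨fun h => extend_of_forall_ne_bot fun x hx => ?_,
    rel_of_extend hΘ fun x y => (hemb x y).2⟩
  have hK := rel_inf_fiberMax hS hΘ hθ (fun x y => (hemb x y).1) h hx
  have hH := rel_inf_fiberMax hS hΘ hθ (fun x y => (hemb x y).1) (hΘ.1.symm h) hx
  rw [inf_comm] at hH
  exact hθ.1.trans (hθ.1.symm hH) hK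

end Uniqueness

end LatticeTensor

/-- For a simple bounded lattice `S` (exactly two lattice congruences) and a lattice
`L`, the map `j : x ↦ 0_S □ x` is an injective, congruence-preserving lattice
homomorphism (embedding) of `L` into `S ⊠ L`. -/
theorem simple_bounded_ltens_congruencePreserving
    (S L : Type*) [Lattice S] [OrderBot S] [OrderTop S] [Lattice L]
    (hnontriv : ∃ a b : S, a ≠ b)
    (hsimple : ∀ θ : S → S → Prop, LatCon S θ →
      (∀ a b : S, θ a b ↔ a = b) ∨ (∀ a b : S, θ a b)) :
    (∀ x : L, boxe S L ⊥ x ∈ ltens S L) ∧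
    Function.Injective (fun x : L => boxe S L ⊥ x) ∧
    (∀ x y : L,
      IsLeast {H | H ∈ ltens S L ∧ boxe S L ⊥ x ⊆ H ∧ boxe S L ⊥ y ⊆ H}
        (boxe S L ⊥ (x ⊔ y)) ∧
      IsGreatest {H | H ∈ ltens S L ∧ H ⊆ boxe S L ⊥ x ∧ H ⊆ boxe S L ⊥ y}
        (boxe S L ⊥ (x ⊓ y))) ∧
    (∀ θ : L → L → Prop, LatCon L θ →
      ∃! Θ : {H // H ∈ ltens S L} → {H // H ∈ ltens S L} → Prop,
        PosetLatCon Θ ∧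
        ∀ (x y : L) (hx : boxe S L ⊥ x ∈ ltens S L) (hy : boxe S L ⊥ y ∈ ltens S L),
          (Θ ⟨boxe S L ⊥ x, hx⟩ ⟨boxe S L ⊥ y, hy⟩ ↔ θ x y)) := by
  have : Nontrivial S := ⟨hnontriv⟩
  let : BoundedOrder S := {}
  refine ⟨boxe_bot_mem_ltens,
    fun x y hxy => LatticeTensor.emb_injective (S := S) (Subtype.ext hxy),
    fun x y => ⟨isLeast_boxe_bot_sup x y, isGreatest_boxe_bot_inf x y⟩, fun θ hθ => ?_⟩
  refine ⟨LatticeTensor.extend θ, ⟨posetLatCon_iff_latCon.2 (LatticeTensor.latCon_extend hθ),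
    fun x y _ _ => LatticeTensor.extend_emb_iff⟩, ?_⟩
  rintro Θ ⟨hΘ, hemb⟩
  exact LatticeTensor.eq_extend hsimple (posetLatCon_iff_latCon.1 hΘ) hθ fun x y =>
    hemb x y (boxe_bot_mem_ltens x) (boxe_bot_mem_ltens y)
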